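/- arXiv:2410.02213 — 3 statements merged into one kernel-verified Lean document; each statement's English description precedes it below -/
import Mathlib

section
/- Let G be a finite connected simple graph with nonempty vertex set V and edge set E, let ψ ∈ H_V, let ε : V → {1, −1}, set σ = ∏_{v∈V} ε_v, and let z ∈ 𝔽₂^E. Then the vector ⟨z|_E ( ∏_{v∈V} ½(id + ε_v A_v) )(ψ ⊗ |0⟩_E) ∈ H_V equals: (i) the zero vector, if z is not in the range of the coboundary map δ; (ii) 2^{−|V|} · ε(c') · ( X_V(c') ψ + σ · X_V(c' + 1_V) ψ ), for any c' ∈ 𝔽₂^V with δc' = z, where 1_V is the all-ones vector — equivalently 2^{−|V|} ε(c') X_V(c') (id + σ L_V) ψ with L_V = X_V(1_V). In particular, up to the Pauli byproduct operator X_V(c') and normalization, the procedure projects ψ onto the σ-eigenspace of the logical operator L_V, with σ equal to the product of the Gauss's law measurement outcomes ε_v. -/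
open Finset

variable {V : Type*} [Fintype V] [DecidableEq V]

/-- The boundary map `∂ : 𝔽₂^E → 𝔽₂^V` of a simple graph, sending the indicator of an edge
to the sum of the indicators of its endpoints. -/
def bd (G : SimpleGraph V) [Fintype G.edgeSet] :
    (G.edgeSet → ZMod 2) →ₗ[ZMod 2] (V → ZMod 2) where
  toFun x := fun v => ∑ e : G.edgeSet, if v ∈ (e : Sym2 V) then x e else 0
  map_add' x y := by
    funext v
    simp only [Pi.add_apply]
    rw [← Finset.sum_add_distrib]
    exact Finset.sum_congr rfl fun e _ => by split <;> simp
  map_smul' r x := by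
    funext v
    simp only [Pi.smul_apply, smul_eq_mul, RingHom.id_apply]
    rw [Finset.mul_sum]
    exact Finset.sum_congr rfl fun e _ => by split <;> simp

/-- The coboundary map `δ : 𝔽₂^V → 𝔽₂^E` of a simple graph (the transpose of `∂`):
`(δ c) e = c u + c v` where `u, v` are the endpoints of `e`. -/
def cobd (G : SimpleGraph V) [Fintype G.edgeSet] :
    (V → ZMod 2) →ₗ[ZMod 2] (G.edgeSet → ZMod 2) where
  toFun c := fun e => ∑ v : V, if v ∈ (e : Sym2 V) then c v else 0
  map_add' x y := by
    funext e
    simp only [Pi.add_apply]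
    rw [← Finset.sum_add_distrib]
    exact Finset.sum_congr rfl fun v _ => by split <;> simp
  map_smul' r x := by
    funext e
    simp only [Pi.smul_apply, smul_eq_mul, RingHom.id_apply]
    rw [Finset.mul_sum]
    exact Finset.sum_congr rfl fun v _ => by split <;> simp

/-- The Hilbert space of the vertex and edge qubits: complex functions on
`𝔽₂^V × 𝔽₂^E` classical configurations. -/
abbrev Hsp (V E : Type*) : Type _ := ((V → ZMod 2) × (E → ZMod 2)) → ℂ

/-- The Pauli-X operator `X(a,b)`, acting by translation:
`(X(a,b) F)(s,t) = F(s + a, t + b)`. -/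
def PX {V E : Type*} (a : V → ZMod 2) (b : E → ZMod 2) : Module.End ℂ (Hsp V E) where
  toFun F := fun p => F (p.1 + a, p.2 + b)
  map_add' _ _ := rfl
  map_smul' _ _ := rfl

/-- The Gauss's law operator `A_v = X(1_v, δ 1_v)`. -/
def gaussA {V : Type*} [Fintype V] [DecidableEq V] (G : SimpleGraph V)
    [Fintype G.edgeSet] (v : V) : Module.End ℂ (Hsp V G.edgeSet) :=
  PX (fun w => if w = v then 1 else 0) (cobd G (fun w => if w = v then 1 else 0))

/-- The Hilbert space of the vertex qubits alone. -/
abbrev HV (V : Type*) : Type _ := (V → ZMod 2) → ℂ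

/-- The Pauli-X operator `X_V(a)` on the vertex qubits: `(X_V(a) f)(s) = f(s + a)`. -/
def PXV {V : Type*} (a : V → ZMod 2) : Module.End ℂ (HV V) where
  toFun f := fun s => f (s + a)
  map_add' _ _ := rfl
  map_smul' _ _ := rfl

/-- `ψ ⊗ |0⟩_E`: the state `ψ` on the vertex qubits tensored with all edge qubits in
state `|0⟩`. -/
def tens {V E : Type*} [Fintype E] (ψ : HV V) : Hsp V E :=
  fun p => if p.2 = 0 then ψ p.1 else 0

/-- The contraction `⟨z|_E` reading out the edge qubits in the configuration `z`. -/
def contr {V E : Type*} (z : E → ZMod 2) (F : Hsp V E) : HV V :=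
  fun a => F (a, z)

/-!
The operators `X(c, δ c)` represent the commutative group `𝔽₂^V`, and `A_v` is the image of `1_v`.
Expanding the product of the projectors in the group algebra of `𝔽₂^V` therefore turns it into
`2^{-|V|} ∑_c ε(c) X(c, δ c)`. The edges start in `|0⟩` and are read out as `z`, so only the `c`
with `δ c = z` survive. On a connected graph `ker δ = {0, 1_V}`, so such `c` are `c'` and
`c' + 1_V`, and the two terms combine because `ε` is a character of `𝔽₂^V`.
-/

theorem zmod_two_eq_zero_or_eq_one (x : ZMod 2) : x = 0 ∨ x = 1 := by
  decide +revert

section OutcomeSign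

variable {V M : Type*} [Fintype V] [CommMonoid M]

/-- The sign `ε(c) = ∏_{v : c v = 1} ε_v` collected by a chain `c ∈ 𝔽₂^V`; the values `ε_v` may lie
in any commutative monoid. -/
def outcomeSign (ε : V → M) (c : V → ZMod 2) : M := ∏ v with c v = 1, ε v

theorem outcomeSign_eq_prod_ite (ε : V → M) (c : V → ZMod 2) :
    outcomeSign ε c = ∏ v, if c v = 1 then ε v else 1 :=
  Finset.prod_filter _ _

theorem outcomeSign_one (ε : V → M) : outcomeSign ε 1 = ∏ v, ε v := by
  simp [outcomeSign]

theorem outcomeSign_add {ε : V → M} (hε : ∀ v, ε v * ε v = 1) (a b : V → ZMod 2) :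
    outcomeSign ε (a + b) = outcomeSign ε a * outcomeSign ε b := by
  simp only [outcomeSign_eq_prod_ite, ← Finset.prod_mul_distrib, Pi.add_apply]
  refine Finset.prod_congr rfl fun v _ => ?_
  rcases zmod_two_eq_zero_or_eq_one (a v) with ha | ha <;>
    rcases zmod_two_eq_zero_or_eq_one (b v) with hb | hb <;>
    simp [ha, hb, hε, CharTwo.add_self_eq_zero]

end OutcomeSign

section Expansion

open Multiplicative (ofAdd)

variable {R A : Type*} [CommSemiring R]

theorem prod_smul_one_add_smul_single [CommSemiring A] [Algebra R A]
    (T : Multiplicative (V → ZMod 2) →* A) (r : R) (ε : V → R) :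
    ∏ v, r • (1 + ε v • T (ofAdd (Pi.single v 1))) =
      r ^ Fintype.card V • ∑ c, outcomeSign ε c • T (ofAdd c) := by
  have factor_eq_sum (v : V) : 1 + ε v • T (ofAdd (Pi.single v 1)) =
      ∑ x : ZMod 2, (if x = 1 then ε v else 1) • T (ofAdd (Pi.single v x)) := by
    rw [show (Finset.univ : Finset (ZMod 2)) = {0, 1} from rfl, Finset.sum_pair zero_ne_one]
    simp
  have prod_single (c : V → ZMod 2) : ∏ v, T (ofAdd (Pi.single v (c v))) = T (ofAdd c) := by
    rw [← map_prod, ← ofAdd_sum, Finset.univ_sum_single]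
  simp only [factor_eq_sum, Finset.prod_smul, Finset.prod_const, Finset.card_univ,
    Fintype.prod_sum, prod_single, outcomeSign_eq_prod_ite]

/-
Since `A` need not be commutative, the product is expanded in the commutative group algebra of
`𝔽₂^V` and then pushed forward along the extension of `T`.
-/
theorem list_prod_smul_one_add_smul_single [Semiring A] [Algebra R A]
    (T : Multiplicative (V → ZMod 2) →* A) (r : R) (ε : V → R) :
    (Finset.univ.toList.map fun v => r • (1 + ε v • T (ofAdd (Pi.single v 1)))).prod =
      r ^ Fintype.card V • ∑ c, outcomeSign ε c • T (ofAdd c) := by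
  have expansion := congrArg (MonoidAlgebra.lift R A _ T)
    (prod_smul_one_add_smul_single (MonoidAlgebra.of R (Multiplicative (V → ZMod 2))) r ε)
  rw [← Finset.prod_map_toList, map_list_prod, List.map_map] at expansion
  simpa [Function.comp_def, mul_smul] using expansion

end Expansion

section Coboundary

variable (G : SimpleGraph V) [Fintype G.edgeSet]

theorem cobd_apply_mk (c : V → ZMod 2) {u v : V} (h : s(u, v) ∈ G.edgeSet) :
    cobd G c ⟨s(u, v), h⟩ = c u + c v := by
  change (∑ w, if w ∈ s(u, v) then c w else 0) = c u + c v
  have endpoints : Finset.univ.filter (· ∈ s(u, v)) = {u, v} := by ext w; simp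
  rw [← Finset.sum_filter, endpoints, Finset.sum_pair (G.mem_edgeSet.mp h).ne]

theorem cobd_eq_zero_iff_forall_adj (c : V → ZMod 2) :
    cobd G c = 0 ↔ ∀ u v, G.Adj u v → c u = c v := by
  simp only [funext_iff, Subtype.forall, Sym2.forall, SimpleGraph.mem_edgeSet, Pi.zero_apply]
  exact forall₂_congr fun u v => forall_congr' fun h => by
    rw [cobd_apply_mk, CharTwo.add_eq_zero]

variable {G}

theorem cobd_eq_zero_iff (hG : G.Preconnected) (c : V → ZMod 2) :
    cobd G c = 0 ↔ c = 0 ∨ c = 1 := by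
  rw [cobd_eq_zero_iff_forall_adj]
  constructor
  · intro adj_eq
    have const (u v : V) : c u = c v := by
      obtain ⟨p⟩ := hG u v
      induction p with
      | nil => rfl
      | cons h _ ih => exact (adj_eq _ _ h).trans ih
    by_cases hc : ∃ v, c v = 1
    · obtain ⟨v, hv⟩ := hc
      exact .inr (funext fun w => (const w v).trans hv)
    · exact .inl (funext fun w => (zmod_two_eq_zero_or_eq_one _).resolve_right (not_exists.mp hc w))
  · rintro (rfl | rfl) <;> simp

theorem filter_cobd_eq (hG : G.Preconnected) (c' : V → ZMod 2) :
    Finset.univ.filter (cobd G · = cobd G c') = {c', c' + 1} := by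
  ext c
  rw [Finset.mem_filter_univ, ← sub_eq_zero, ← map_sub, cobd_eq_zero_iff hG, sub_eq_zero,
    sub_eq_iff_eq_add', Finset.mem_insert, Finset.mem_singleton]

end Coboundary

section Readout

variable {V E : Type*}

theorem contr_eq_funLeft (z : E → ZMod 2) :
    (contr z : Hsp V E → HV V) = LinearMap.funLeft ℂ ℂ (·, z) :=
  rfl

theorem contr_PX_tens [Fintype E] (a : V → ZMod 2) (b z : E → ZMod 2) (ψ : HV V) :
    contr z (PX a b (tens ψ)) = if b = z then PXV a ψ else 0 := by
  have flip_iff : z + b = 0 ↔ b = z := by rw [← ZModModule.sub_eq_add, sub_eq_zero, eq_comm]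
  ext s
  simp only [contr, PX, tens, PXV, LinearMap.coe_mk, AddHom.coe_mk, flip_iff]
  split_ifs <;> rfl

end Readout

section Gauging

variable (G : SimpleGraph V) [Fintype G.edgeSet]

/-- The representation `c ↦ X(c, δ c)` of `𝔽₂^V` by gauge transformations. The group is written
multiplicatively so that the representation is a monoid homomorphism. -/
def gaugeRep : Multiplicative (V → ZMod 2) →* Module.End ℂ (Hsp V G.edgeSet) where
  toFun c := PX c.toAdd (cobd G c.toAdd)
  map_one' := by ext F p; simp [PX]
  map_mul' a b := by ext F p; simp [PX, add_assoc]

theorem gaugeRep_ofAdd (c : V → ZMod 2) : gaugeRep G (.ofAdd c) = PX c (cobd G c) :=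
  rfl

theorem gaussA_eq_gaugeRep (v : V) :
    gaussA G v = gaugeRep G (.ofAdd (Pi.single v 1)) := by
  have indicator : (fun w => if w = v then 1 else 0) = (Pi.single v 1 : V → ZMod 2) :=
    funext fun w => (Pi.single_apply v 1 w).symm
  rw [gaussA, indicator, gaugeRep_ofAdd]

theorem contr_gauss_prod_tens (ε : V → ℂ) (ψ : HV V) (z : G.edgeSet → ZMod 2) :
    contr z ((Finset.univ.toList.map fun v => (2⁻¹ : ℂ) • (1 + ε v • gaussA G v)).prod (tens ψ)) =
      ((2 : ℂ) ^ Fintype.card V)⁻¹ • ∑ c with cobd G c = z, outcomeSign ε c • PXV c ψ := by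
  simp only [gaussA_eq_gaugeRep]
  rw [list_prod_smul_one_add_smul_single, inv_pow, LinearMap.smul_apply, LinearMap.sum_apply,
    contr_eq_funLeft, map_smul, map_sum, Finset.sum_filter]
  congr 1
  refine Finset.sum_congr rfl fun c _ => ?_
  rw [LinearMap.smul_apply, map_smul, ← contr_eq_funLeft, gaugeRep_ofAdd, contr_PX_tens, smul_ite,
    smul_zero]

end Gauging

/-- **Gauging measurement.** For a connected graph `G`, outcomes
`ε : V → {±1}` with `σ = ∏_v ε_v`, and any `z ∈ 𝔽₂^E`, the vector
`⟨z|_E (∏_v ½(id + ε_v A_v)) (ψ ⊗ |0⟩_E)` is (i) zero if `z` is not in the range of the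
coboundary map `δ`, and (ii) equals
`2^{−|V|} ε(c') (X_V(c') ψ + σ X_V(c' + 1_V) ψ)` for any `c'` with `δ c' = z`. -/
theorem gauging_measurement {V : Type*} [Fintype V] [DecidableEq V]
    (G : SimpleGraph V) [Fintype G.edgeSet] (hG : G.Connected)
    (ε : V → ℂ) (hε : ∀ v, ε v = 1 ∨ ε v = -1)
    (ψ : HV V) (z : G.edgeSet → ZMod 2) :
    (z ∉ LinearMap.range (cobd G) →
      contr z
        ((Finset.univ.toList.map (fun v => (2⁻¹ : ℂ) • (1 + ε v • gaussA G v))).prod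
          (tens ψ)) = 0) ∧
    (∀ c' : V → ZMod 2, cobd G c' = z →
      contr z
        ((Finset.univ.toList.map (fun v => (2⁻¹ : ℂ) • (1 + ε v • gaussA G v))).prod
          (tens ψ))
        = ((2 : ℂ) ^ Fintype.card V)⁻¹ •
            ((∏ v ∈ Finset.univ.filter (fun v => c' v = 1), ε v) •
              (PXV c' ψ + (∏ v, ε v) • PXV (c' + fun _ => 1) ψ))) := by
  simp only [contr_gauss_prod_tens]
  constructor
  · intro hz
    have fiber_empty : Finset.univ.filter (cobd G · = z) = ∅ :=
      Finset.filter_eq_empty_iff.mpr fun c _ hc => hz ⟨c, hc⟩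
    rw [fiber_empty, Finset.sum_empty, smul_zero]
  · rintro c' rfl
    have := hG.nonempty
    have ne_add_one : c' ≠ c' + 1 := by simp
    have hε_sq (v : V) : ε v * ε v = 1 := mul_self_eq_one_iff.mpr (hε v)
    rw [filter_cobd_eq hG.preconnected, Finset.sum_pair ne_add_one, outcomeSign_add hε_sq,
      outcomeSign_one, mul_smul, ← smul_add]
    rfl
end

section
/- With the deformed code construction, assuming G is connected and ℓ is not in the row space of H_X: the number of logical qubits of the deformed code is exactly one fewer than that of the original code; that is, (n + |E|) − rank H'_X − rank H'_Z = (n − rank H_X − rank H_Z) − 1. In other words, the gauging code deformation reduces the dimension of the codespace by exactly one qubit, corresponding to the measured logical operator. -/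
open Finset

variable {V : Type*} [Fintype V] [DecidableEq V]

/-- The Gauss's law row `a_v = (1_v, δ 1_v) ∈ 𝔽₂^n × 𝔽₂^E` of the deformed `X`-check
matrix, for a vertex `v` of the graph `G` on the support of the logical `ℓ`. -/
def gaussRow {n : ℕ} {ℓ : Fin n → ZMod 2} (G : SimpleGraph {i : Fin n // ℓ i = 1})
    [Fintype G.edgeSet] (v : {i : Fin n // ℓ i = 1}) : (Fin n ⊕ G.edgeSet) → ZMod 2 :=
  Sum.elim (fun i => if i = v.1 then 1 else 0) (cobd G (fun w => if w = v then 1 else 0))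

/-- The deformed `X`-check matrix `H'_X`: the rows of `H_X` padded with zeros on the edge
coordinates, together with the Gauss's law rows `a_v` for the vertices of `G`. -/
def deformedHX {n : ℕ} {rX : Type*} (HX : Matrix rX (Fin n) (ZMod 2))
    {ℓ : Fin n → ZMod 2} (G : SimpleGraph {i : Fin n // ℓ i = 1}) [Fintype G.edgeSet] :
    Matrix (rX ⊕ {i : Fin n // ℓ i = 1}) (Fin n ⊕ G.edgeSet) (ZMod 2) :=
  Matrix.of (Sum.elim (fun j => Sum.elim (fun i => HX j i) 0) (fun v => gaussRow G v))

/-- The deformed `Z`-check matrix `H'_Z`: the rows `(z, γ_z)` for the rows `z` of `H_Z`,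
together with the cycle rows `(0, p)` for the rows `p` of the cycle-basis matrix `N`. -/
def deformedHZ {n : ℕ} {rZ rN : Type*} (HZ : Matrix rZ (Fin n) (ZMod 2))
    {ℓ : Fin n → ZMod 2} (G : SimpleGraph {i : Fin n // ℓ i = 1}) [Fintype G.edgeSet]
    (γ : rZ → G.edgeSet → ZMod 2) (N : rN → G.edgeSet → ZMod 2) :
    Matrix (rZ ⊕ rN) (Fin n ⊕ G.edgeSet) (ZMod 2) :=
  Matrix.of (Sum.elim (fun z => Sum.elim (fun i => HZ z i) (γ z)) (fun p => Sum.elim 0 (N p)))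

/-! Both deformed row spaces are computed by splitting `𝔽₂^n × 𝔽₂^E` into its two factors.

* An element of the row space of `H'_X` supported on the qubits is an element of the row space of
  `H_X` plus `∑ v, c v • a_v` with `δ c = 0`. By connectedness `c` is constant, so that sum is `0`
  or `ℓ`: the measured logical becomes a stabilizer. Since the edge components fill out `im δ`,
  `rank H'_X = rank H_X + 1 + rank δ`.
* Every element `(x, y)` of the row space of `H'_Z` satisfies `∂ y = x|_V`, so those supported on
  the edges are exactly the cycles, and `rank H'_Z = rank H_Z + dim ker ∂`.

As `rank δ = rank ∂`, rank–nullity for `∂` makes the total rank grow by `|E| + 1`, against `|E|` new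
qubits. -/

section LinearAlgebra

open Module Submodule

theorem finrank_map_add_finrank_comap_of_exact {K L M M' : Type*} [DivisionRing K]
    [AddCommGroup L] [Module K L] [AddCommGroup M] [Module K M] [AddCommGroup M'] [Module K M']
    {g : L →ₗ[K] M} {f : M →ₗ[K] M'}
    (hg : Function.Injective g) (hgf : Function.Exact g f) (S : Submodule K M)
    [FiniteDimensional K S] :
    finrank K (S.map f) + finrank K (S.comap g) = finrank K S := by
  have hker : (S.comap g).map g = (LinearMap.ker (f.domRestrict S)).map S.subtype := by
    rw [map_comap_eq, ← hgf.linearMap_ker_eq, LinearMap.ker_domRestrict, map_comap_eq,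
      range_subtype, inf_comm]
  rw [← LinearMap.range_domRestrict, (equivMapOfInjective g hg (S.comap g)).finrank_eq, hker,
    finrank_map_subtype_eq, LinearMap.finrank_range_add_finrank_ker]

theorem finrank_range_eq_of_toMatrix'_eq_transpose {K m n : Type*} [Field K] [Fintype m] [Fintype n]
    [DecidableEq m] [DecidableEq n] {f : (m → K) →ₗ[K] (n → K)} {g : (n → K) →ₗ[K] (m → K)}
    (h : LinearMap.toMatrix' g = (LinearMap.toMatrix' f).transpose) :
    finrank K (LinearMap.range g) = finrank K (LinearMap.range f) := by
  rw [← Matrix.toLin'_toMatrix' g, ← Matrix.toLin'_toMatrix' f, h]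
  exact Matrix.rank_transpose _

variable {R : Type*} [Semiring R]

/-- The row space of a matrix; for a check matrix, the group of stabilizers its rows generate. -/
abbrev rowSpace {m n : Type*} (A : Matrix m n R) : Submodule R (n → R) :=
  span R (Set.range A.row)

variable (R) (α β : Type*)

/-- The inclusion `x ↦ (x, 0)` of `R^α`, padding qubit vectors by zeros, with `R^α × R^β` encoded
as functions on `α ⊕ β`. -/
def padLeft : (α → R) →ₗ[R] (α ⊕ β → R) :=
  (LinearEquiv.sumArrowLequivProdArrow α β R R).symm.toLinearMap ∘ₗ LinearMap.inl R _ _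

/-- The inclusion `y ↦ (0, y)` of `R^β`, padding edge vectors by zeros, with `R^α × R^β` encoded
as functions on `α ⊕ β`. -/
def padRight : (β → R) →ₗ[R] (α ⊕ β → R) :=
  (LinearEquiv.sumArrowLequivProdArrow α β R R).symm.toLinearMap ∘ₗ LinearMap.inr R _ _

variable {R α β}

theorem padLeft_apply (x : α → R) : padLeft R α β x = Sum.elim x 0 := rfl

theorem padRight_apply (y : β → R) : padRight R α β y = Sum.elim (0 : α → R) y := rfl

theorem padLeft_injective : Function.Injective (padLeft R α β) :=
  (LinearEquiv.sumArrowLequivProdArrow α β R R).symm.injective.comp LinearMap.inl_injective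

theorem padRight_injective : Function.Injective (padRight R α β) :=
  (LinearEquiv.sumArrowLequivProdArrow α β R R).symm.injective.comp LinearMap.inr_injective

theorem exact_padLeft_funLeft_inr :
    Function.Exact (padLeft R α β) (LinearMap.funLeft R R Sum.inr) := by
  refine fun w => ⟨fun hw => ⟨w ∘ Sum.inl, ?_⟩, ?_⟩
  · rw [padLeft_apply, ← hw]
    exact Sum.elim_comp_inl_inr w
  · rintro ⟨x, rfl⟩
    rfl

theorem exact_padRight_funLeft_inl :
    Function.Exact (padRight R α β) (LinearMap.funLeft R R Sum.inl) := by
  refine fun w => ⟨fun hw => ⟨w ∘ Sum.inr, ?_⟩, ?_⟩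
  · rw [padRight_apply, ← hw]
    exact Sum.elim_comp_inl_inr w
  · rintro ⟨y, rfl⟩
    rfl

end LinearAlgebra

section Graph

open Module

variable (G : SimpleGraph V) [Fintype G.edgeSet]

theorem cobd_apply_of_adj (c : V → ZMod 2) {u v : V} (huv : G.Adj u v) :
    cobd G c ⟨s(u, v), huv⟩ = c u + c v := by
  change ∑ w, (if w ∈ s(u, v) then c w else 0) = c u + c v
  rw [← Finset.sum_filter, ← Finset.sum_pair huv.ne]
  congr 1
  ext w
  simp

theorem cobd_one : cobd G 1 = 0 := by
  ext ⟨⟨u, v⟩, huv⟩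
  exact (cobd_apply_of_adj G 1 huv).trans (CharTwo.add_self_eq_zero 1)

variable {G} in
theorem eq_of_cobd_eq_zero {c : V → ZMod 2} (hc : cobd G c = 0) {u v : V}
    (huv : G.Reachable u v) : c u = c v := by
  obtain ⟨walk⟩ := huv
  induction walk with
  | nil => rfl
  | cons hadj _ ih =>
    have hsum := cobd_apply_of_adj G c hadj
    rw [hc] at hsum
    exact (CharTwo.add_eq_zero.1 hsum.symm).trans ih

variable {G} in
theorem ker_cobd_eq_span_one (hG : G.Connected) :
    LinearMap.ker (cobd G) = Submodule.span (ZMod 2) {1} := by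
  refine le_antisymm (fun c hc => ?_) ?_
  · obtain ⟨w⟩ := hG.nonempty
    refine Submodule.mem_span_singleton.2 ⟨c w, funext fun v => ?_⟩
    simpa using eq_of_cobd_eq_zero hc (hG.preconnected w v)
  · rw [Submodule.span_singleton_le_iff_mem]
    exact cobd_one G

theorem toMatrix'_cobd :
    LinearMap.toMatrix' (cobd G) = (LinearMap.toMatrix' (bd G)).transpose := by
  ext e v
  simp [LinearMap.toMatrix'_apply, bd, cobd, ← Finset.sum_filter, Finset.sum_pi_single']

theorem finrank_range_cobd_add_finrank_ker_bd :
    finrank (ZMod 2) (LinearMap.range (cobd G)) + finrank (ZMod 2) (LinearMap.ker (bd G)) =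
      Fintype.card G.edgeSet := by
  rw [finrank_range_eq_of_toMatrix'_eq_transpose (toMatrix'_cobd G),
    LinearMap.finrank_range_add_finrank_ker, finrank_pi]

end Graph

section DeformedCode

open Module Submodule

variable {n : ℕ} {ℓ : Fin n → ZMod 2} {G : SimpleGraph {i : Fin n // ℓ i = 1}} [Fintype G.edgeSet]

section XChecks

variable {rX : Type*} (HX : Matrix rX (Fin n) (ZMod 2))

variable (G) in
theorem funLeft_inr_comp_linearCombination_gaussRow :
    LinearMap.funLeft (ZMod 2) (ZMod 2) Sum.inr ∘ₗ
      Fintype.linearCombination (ZMod 2) (gaussRow G) = cobd G := by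
  refine LinearMap.pi_ext' fun v => LinearMap.ext_ring ?_
  ext e
  simp [gaussRow, LinearMap.funLeft_apply, Pi.single_apply, cobd]

variable (G) in
theorem linearCombination_gaussRow_one :
    Fintype.linearCombination (ZMod 2) (gaussRow G) 1 = padLeft (ZMod 2) (Fin n) G.edgeSet ℓ := by
  ext (i | e)
  · suffices ∑ v : {i // ℓ i = 1}, (if i = v.1 then (1 : ZMod 2) else 0) = ℓ i by
      simpa [Fintype.linearCombination_apply, gaussRow, padLeft_apply]
    have hite : ∀ a : ZMod 2, (if a = 1 then 1 else 0) = a := by decide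
    rw [← Finset.sum_subtype {j | ℓ j = 1} (by simp) fun j => if i = j then (1 : ZMod 2) else 0]
    simp [hite]
  · have hedge := DFunLike.congr_fun (funLeft_inr_comp_linearCombination_gaussRow G) 1
    rw [cobd_one] at hedge
    exact congrFun hedge e

variable (G) in
theorem rowSpace_deformedHX :
    rowSpace (deformedHX HX G) = (rowSpace HX).map (padLeft (ZMod 2) (Fin n) G.edgeSet) ⊔
      LinearMap.range (Fintype.linearCombination (ZMod 2) (gaussRow G)) := by
  rw [Fintype.range_linearCombination, map_span, ← span_union, ← Set.range_comp]
  exact congrArg (span (ZMod 2)) (Set.Sum.elim_range _ _)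

variable (G) in
theorem map_funLeft_inr_rowSpace_deformedHX :
    (rowSpace (deformedHX HX G)).map (LinearMap.funLeft (ZMod 2) (ZMod 2) Sum.inr) =
      LinearMap.range (cobd G) := by
  rw [rowSpace_deformedHX, Submodule.map_sup, ← Submodule.map_comp,
    exact_padLeft_funLeft_inr.linearMap_comp_eq_zero, Submodule.map_zero, bot_sup_eq,
    ← LinearMap.range_comp, funLeft_inr_comp_linearCombination_gaussRow]

theorem comap_padLeft_rowSpace_deformedHX (hG : G.Connected) :
    (rowSpace (deformedHX HX G)).comap (padLeft (ZMod 2) (Fin n) G.edgeSet) =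
      rowSpace HX ⊔ span (ZMod 2) {ℓ} := by
  rw [rowSpace_deformedHX]
  refine le_antisymm (fun x hx => ?_) ?_
  · obtain ⟨_, ⟨r, hr, rfl⟩, _, ⟨c, rfl⟩, hsum⟩ := mem_sup.1 hx
    have hc : c ∈ LinearMap.ker (cobd G) := by
      rw [← funLeft_inr_comp_linearCombination_gaussRow]
      simpa [exact_padLeft_funLeft_inr.apply_apply_eq_zero] using
        congrArg (LinearMap.funLeft (ZMod 2) (ZMod 2) Sum.inr) hsum
    rw [ker_cobd_eq_span_one hG] at hc
    obtain ⟨a, rfl⟩ := mem_span_singleton.1 hc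
    rw [map_smul, linearCombination_gaussRow_one, ← map_smul, ← map_add] at hsum
    rw [← padLeft_injective hsum]
    exact add_mem_sup hr (smul_mem _ a (mem_span_singleton_self ℓ))
  · refine sup_le (map_le_iff_le_comap.1 le_sup_left) ?_
    rw [span_singleton_le_iff_mem, mem_comap, ← linearCombination_gaussRow_one]
    exact mem_sup_right (LinearMap.mem_range_self _ 1)

variable {HX} in
theorem rank_deformedHX [Finite rX] (hℓX : ℓ ∉ rowSpace HX) (hG : G.Connected) :
    (deformedHX HX G).rank = HX.rank + 1 + finrank (ZMod 2) (LinearMap.range (cobd G)) := by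
  rw [Matrix.rank_eq_finrank_span_row, Matrix.rank_eq_finrank_span_row,
    ← finrank_map_add_finrank_comap_of_exact padLeft_injective exact_padLeft_funLeft_inr,
    map_funLeft_inr_rowSpace_deformedHX, comap_padLeft_rowSpace_deformedHX HX hG,
    finrank_sup_span_singleton hℓX, add_comm]

end XChecks

section ZChecks

variable {rZ rN : Type*} {HZ : Matrix rZ (Fin n) (ZMod 2)} {γ : rZ → G.edgeSet → ZMod 2}
  {N : rN → G.edgeSet → ZMod 2}

variable (HZ γ N) in
theorem map_funLeft_inl_rowSpace_deformedHZ :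
    (rowSpace (deformedHZ HZ G γ N)).map (LinearMap.funLeft (ZMod 2) (ZMod 2) Sum.inl) =
      rowSpace HZ := by
  refine le_antisymm ?_ ?_
  · rw [map_span, span_le]
    rintro _ ⟨_, ⟨z | p, rfl⟩, rfl⟩
    exacts [subset_span ⟨z, rfl⟩, zero_mem _]
  · rw [span_le]
    rintro _ ⟨z, rfl⟩
    exact ⟨_, subset_span ⟨Sum.inl z, rfl⟩, rfl⟩

theorem bd_eq_restrict_of_mem_rowSpace_deformedHZ (hγ : ∀ z, bd G (γ z) = fun v => HZ z v.1)
    (hN : ∀ p, bd G (N p) = 0) {w : Fin n ⊕ G.edgeSet → ZMod 2}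
    (hw : w ∈ rowSpace (deformedHZ HZ G γ N)) :
    bd G (w ∘ Sum.inr) = fun v => w (Sum.inl v.1) := by
  have hle : rowSpace (deformedHZ HZ G γ N) ≤ LinearMap.eqLocus
      (bd G ∘ₗ LinearMap.funLeft (ZMod 2) (ZMod 2) Sum.inr)
      (LinearMap.funLeft (ZMod 2) (ZMod 2) fun v => Sum.inl v.1) := by
    rw [span_le]
    rintro _ ⟨z | p, rfl⟩
    exacts [hγ z, hN p]
  exact hle hw

theorem comap_padRight_rowSpace_deformedHZ (hγ : ∀ z, bd G (γ z) = fun v => HZ z v.1)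
    (hN : span (ZMod 2) (Set.range N) = LinearMap.ker (bd G)) :
    (rowSpace (deformedHZ HZ G γ N)).comap (padRight (ZMod 2) (Fin n) G.edgeSet) =
      LinearMap.ker (bd G) := by
  refine le_antisymm (fun y hy => ?_) ?_
  · have hcycle (p : rN) : bd G (N p) = 0 := hN.le (subset_span ⟨p, rfl⟩)
    exact bd_eq_restrict_of_mem_rowSpace_deformedHZ hγ hcycle hy
  · rw [← hN, span_le]
    rintro _ ⟨p, rfl⟩
    exact subset_span ⟨Sum.inr p, rfl⟩

theorem rank_deformedHZ [Finite rZ] [Finite rN] (hγ : ∀ z, bd G (γ z) = fun v => HZ z v.1)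
    (hN : span (ZMod 2) (Set.range N) = LinearMap.ker (bd G)) :
    (deformedHZ HZ G γ N).rank = HZ.rank + finrank (ZMod 2) (LinearMap.ker (bd G)) := by
  rw [Matrix.rank_eq_finrank_span_row, Matrix.rank_eq_finrank_span_row,
    ← finrank_map_add_finrank_comap_of_exact padRight_injective exact_padRight_funLeft_inl,
    map_funLeft_inl_rowSpace_deformedHZ, comap_padRight_rowSpace_deformedHZ hγ hN]

end ZChecks

end DeformedCode

theorem deformed_code_loses_one_logical_general {n : ℕ} {rX rZ rN : Type*}
    [Finite rX] [Finite rZ] [Finite rN]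
    {HX : Matrix rX (Fin n) (ZMod 2)} {HZ : Matrix rZ (Fin n) (ZMod 2)}
    {ℓ : Fin n → ZMod 2} (hℓX : ℓ ∉ rowSpace HX)
    {G : SimpleGraph {i : Fin n // ℓ i = 1}} [Fintype G.edgeSet] (hG : G.Connected)
    {γ : rZ → G.edgeSet → ZMod 2} (hγ : ∀ z, bd G (γ z) = fun v => HZ z v.1)
    {N : rN → G.edgeSet → ZMod 2}
    (hN : Submodule.span (ZMod 2) (Set.range N) = LinearMap.ker (bd G)) :
    ((n : ℤ) + Fintype.card G.edgeSet)
        - (deformedHX HX G).rank - (deformedHZ HZ G γ N).rank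
      = ((n : ℤ) - HX.rank - HZ.rank) - 1 := by
  rw [rank_deformedHX hℓX hG, rank_deformedHZ hγ hN, ← finrank_range_cobd_add_finrank_ker_bd G]
  push_cast
  ring

/-- The gauging code deformation reduces the number of logical qubits by
exactly one: `(n + |E|) − rank H'_X − rank H'_Z = (n − rank H_X − rank H_Z) − 1`
(as integers). -/
theorem deformed_code_loses_one_logical {n : ℕ} {rX rZ rN : Type*}
    [Fintype rX] [Fintype rZ] [Fintype rN]
    (HX : Matrix rX (Fin n) (ZMod 2)) (HZ : Matrix rZ (Fin n) (ZMod 2))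
    (hCSS : HX * HZ.transpose = 0)
    (ℓ : Fin n → ZMod 2) (hℓZ : HZ.mulVec ℓ = 0)
    (hℓX : ℓ ∉ LinearMap.range HX.vecMulLinear)
    (G : SimpleGraph {i : Fin n // ℓ i = 1}) [Fintype G.edgeSet] (hG : G.Connected)
    (γ : rZ → G.edgeSet → ZMod 2)
    (hγ : ∀ z : rZ, bd G (γ z) = fun v => HZ z v.1)
    (N : rN → G.edgeSet → ZMod 2)
    (hN0 : ∀ p : rN, bd G (N p) = 0)
    (hNli : LinearIndependent (ZMod 2) N)
    (hNspan : ∀ y : G.edgeSet → ZMod 2, bd G y = 0 →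
      y ∈ Submodule.span (ZMod 2) (Set.range N)) :
    ((n : ℤ) + Fintype.card G.edgeSet)
        - (deformedHX HX G).rank - (deformedHZ HZ G γ N).rank
      = ((n : ℤ) - HX.rank - HZ.rank) - 1 := by
  rw [range_vecMulLinear] at hℓX
  exact deformed_code_loses_one_logical_general hℓX hG hγ
    (le_antisymm (Submodule.span_le.2 (Set.range_subset_iff.2 hN0)) hNspan)
end

section
/- Restriction lemma for Z-type logicals of the deformed code: with the deformed code construction, for every w ∈ 𝔽₂^{n+|E|} with H'_X w = 0, the restriction w|_n of w to the first n coordinates satisfies H_X (w|_n) = 0; and if w is not in the row space of H'_Z, then w|_n is not in the row space of H_Z. In particular, every Z-type logical operator of the deformed code restricts to a nontrivial Z-type logical operator of the original code. -/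
open Finset

variable {V : Type*} [Fintype V] [DecidableEq V]

/-!
The Gauss rows force `∂ (w|_E) = (w|_n)|_V` for every `w` in the kernel of `H'_X`. If moreover
`w|_n = c H_Z`, then `∂ (∑ c_z γ_z)` is the same vector, so `w|_E - ∑ c_z γ_z` is a cycle and hence
a combination `d N` of the rows of `N`. Thus `w = (c, d) H'_Z`.
-/

section DeformedCode

open scoped Matrix

theorem map_sum_smul_eq_vecMul_comp {R E ι κ r : Type*} [Semiring R] [AddCommMonoid E]
    [Module R E] [Fintype r] (φ : E →ₗ[R] κ → R) {x : r → E} {M : Matrix r ι R} {f : κ → ι}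
    (hx : ∀ z, φ (x z) = M z ∘ f) (c : r → R) : φ (∑ z, c z • x z) = (c ᵥ* M) ∘ f := by
  ext k
  simp [hx, Matrix.vecMul, dotProduct]

theorem cobd_dotProduct (G : SimpleGraph V) [Fintype G.edgeSet] (c : V → ZMod 2)
    (x : G.edgeSet → ZMod 2) : cobd G c ⬝ᵥ x = c ⬝ᵥ bd G x := by
  simp only [dotProduct, cobd, bd, LinearMap.coe_mk, AddHom.coe_mk, Finset.sum_mul,
    Finset.mul_sum, ite_mul, mul_ite, zero_mul, mul_zero]
  exact Finset.sum_comm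

variable {n : ℕ} {rX rZ rN : Type*} {ℓ : Fin n → ZMod 2}
  (G : SimpleGraph {i : Fin n // ℓ i = 1}) [Fintype G.edgeSet]

theorem gaussRow_dotProduct (v : {i : Fin n // ℓ i = 1}) (w : Fin n ⊕ G.edgeSet → ZMod 2) :
    gaussRow G v ⬝ᵥ w = w (Sum.inl v) + bd G (w ∘ Sum.inr) v := by
  rw [← Sum.elim_comp_inl_inr w, gaussRow, sumElim_dotProduct_sumElim, cobd_dotProduct]
  simp [dotProduct]

theorem deformedHX_mulVec_eq_zero_iff (HX : Matrix rX (Fin n) (ZMod 2))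
    (w : Fin n ⊕ G.edgeSet → ZMod 2) :
    deformedHX HX G *ᵥ w = 0 ↔
      HX *ᵥ (w ∘ Sum.inl) = 0 ∧ bd G (w ∘ Sum.inr) = w ∘ Sum.inl ∘ Subtype.val := by
  have padded_row (j : rX) : (deformedHX HX G *ᵥ w) (Sum.inl j) = (HX *ᵥ (w ∘ Sum.inl)) j := by
    simp [deformedHX, Matrix.mulVec, dotProduct]
  have gauss_row (v : {i : Fin n // ℓ i = 1}) :
      (deformedHX HX G *ᵥ w) (Sum.inr v) = w (Sum.inl v) + bd G (w ∘ Sum.inr) v :=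
    gaussRow_dotProduct G v w
  simp only [funext_iff, Sum.forall, padded_row, gauss_row, Pi.zero_apply, CharTwo.add_eq_zero,
    Function.comp_apply, eq_comm (b := bd G _ _)]

variable [Fintype rZ] [Fintype rN]

theorem sumElim_vecMul_deformedHZ (HZ : Matrix rZ (Fin n) (ZMod 2))
    (γ : rZ → G.edgeSet → ZMod 2) (N : rN → G.edgeSet → ZMod 2)
    (c : rZ → ZMod 2) (d : rN → ZMod 2) :
    Sum.elim c d ᵥ* deformedHZ HZ G γ N =
      Sum.elim (c ᵥ* HZ) (∑ z, c z • γ z + ∑ p, d p • N p) := by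
  ext (i | e) <;> simp [deformedHZ, Matrix.vecMul, dotProduct]

theorem sumElim_mem_range_vecMulLinear_deformedHZ {HZ : Matrix rZ (Fin n) (ZMod 2)}
    {γ : rZ → G.edgeSet → ZMod 2} {N : rN → G.edgeSet → ZMod 2}
    (c : rZ → ZMod 2) {y : G.edgeSet → ZMod 2}
    (hy : y - ∑ z, c z • γ z ∈ Submodule.span (ZMod 2) (Set.range N)) :
    Sum.elim (c ᵥ* HZ) y ∈ LinearMap.range (deformedHZ HZ G γ N).vecMulLinear := by
  obtain ⟨d, hd⟩ := (Submodule.mem_span_range_iff_exists_fun (ZMod 2)).mp hy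
  refine ⟨Sum.elim c d, ?_⟩
  rw [Matrix.vecMulLinear_apply, sumElim_vecMul_deformedHZ, hd, add_sub_cancel]

variable {G}

theorem deformed_Z_logical_restriction_general
    (HX : Matrix rX (Fin n) (ZMod 2)) (HZ : Matrix rZ (Fin n) (ZMod 2))
    {γ : rZ → G.edgeSet → ZMod 2} (hγ : ∀ z, bd G (γ z) = HZ z ∘ Subtype.val)
    {N : rN → G.edgeSet → ZMod 2}
    (hN : LinearMap.ker (bd G) ≤ Submodule.span (ZMod 2) (Set.range N))
    {w : Fin n ⊕ G.edgeSet → ZMod 2} (hw : deformedHX HX G *ᵥ w = 0) :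
    HX *ᵥ (w ∘ Sum.inl) = 0 ∧
      (w ∉ LinearMap.range (deformedHZ HZ G γ N).vecMulLinear →
        w ∘ Sum.inl ∉ LinearMap.range HZ.vecMulLinear) := by
  obtain ⟨hX, hbd⟩ := (deformedHX_mulVec_eq_zero_iff G HX w).mp hw
  refine ⟨hX, mt ?_⟩
  rintro ⟨c, hc : c ᵥ* HZ = w ∘ Sum.inl⟩
  have sub_mem_ker : w ∘ Sum.inr - ∑ z, c z • γ z ∈ LinearMap.ker (bd G) := by
    rw [LinearMap.sub_mem_ker_iff, hbd, map_sum_smul_eq_vecMul_comp (bd G) hγ, hc,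
      Function.comp_assoc]
  rw [← Sum.elim_comp_inl_inr w, ← hc]
  exact sumElim_mem_range_vecMulLinear_deformedHZ G c (hN sub_mem_ker)

end DeformedCode

/-- **Restriction lemma for Z-type logicals.** Every `w` with
`H'_X w = 0` restricts on the first `n` coordinates to a vector in the kernel of `H_X`;
and if `w` is not a deformed `Z`-stabilizer then its restriction is not a `Z`-stabilizer
of the original code. -/
theorem deformed_Z_logical_restriction {n : ℕ} {rX rZ rN : Type*}
    [Fintype rX] [Fintype rZ] [Fintype rN]
    (HX : Matrix rX (Fin n) (ZMod 2)) (HZ : Matrix rZ (Fin n) (ZMod 2))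
    (hCSS : HX * HZ.transpose = 0)
    (ℓ : Fin n → ZMod 2) (hℓZ : HZ.mulVec ℓ = 0)
    (hℓX : ℓ ∉ LinearMap.range HX.vecMulLinear)
    (G : SimpleGraph {i : Fin n // ℓ i = 1}) [Fintype G.edgeSet] (hG : G.Connected)
    (γ : rZ → G.edgeSet → ZMod 2)
    (hγ : ∀ z : rZ, bd G (γ z) = fun v => HZ z v.1)
    (N : rN → G.edgeSet → ZMod 2)
    (hN0 : ∀ p : rN, bd G (N p) = 0)
    (hNli : LinearIndependent (ZMod 2) N)
    (hNspan : ∀ y : G.edgeSet → ZMod 2, bd G y = 0 →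
      y ∈ Submodule.span (ZMod 2) (Set.range N)) :
    ∀ w : (Fin n ⊕ G.edgeSet) → ZMod 2, (deformedHX HX G).mulVec w = 0 →
      HX.mulVec (fun i => w (Sum.inl i)) = 0 ∧
      (w ∉ LinearMap.range (deformedHZ HZ G γ N).vecMulLinear →
        (fun i => w (Sum.inl i)) ∉ LinearMap.range HZ.vecMulLinear) :=
  fun _ => deformed_Z_logical_restriction_general HX HZ hγ hNspan
end
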